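/- Let σ₁², σ₂², σ₁₂ be real numbers and let Σ_x be the 2×2 real symmetric matrix [[σ₁², σ₁₂],[σ₁₂, σ₂²]]; assume Σ_x is positive semidefinite and let ρ ≥ 0. Set Δ_x := σ₁²σ₂² − σ₁₂² and Δ_r := 1 + ρ(σ₁² + σ₂² + ρΔ_x), and define Σ_c := Σ_x − ρ·Σ_x·(I₂ + ρΣ_x)⁻¹·Σ_x. Then det(Σ_c) = Δ_x / Δ_r. -/

import Mathlib

open Matrix

section CommRing

variable {n R : Type*} [Fintype n] [DecidableEq n] [CommRing R]

theorem sub_smul_mul_inv_one_add_smul_mul {A : Matrix n n R} {ρ : R}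
    (h : IsUnit (1 + ρ • A).det) :
    A - ρ • (A * (1 + ρ • A)⁻¹ * A) = A * (1 + ρ • A)⁻¹ := by
  rw [sub_eq_iff_eq_add]
  calc A = A * (1 + ρ • A)⁻¹ * (1 + ρ • A) := (nonsing_inv_mul_cancel_right _ A h).symm
    _ = A * (1 + ρ • A)⁻¹ + ρ • (A * (1 + ρ • A)⁻¹ * A) := by
      rw [mul_add, mul_one, mul_smul_comm]

theorem det_sigma_c_general {A : Matrix n n R} {ρ : R} (h : IsUnit (1 + ρ • A).det) :
    (A - ρ • (A * (1 + ρ • A)⁻¹ * A)).det = A.det * Ring.inverse (1 + ρ • A).det := by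
  rw [sub_smul_mul_inv_one_add_smul_mul h, det_mul, det_nonsing_inv]

theorem det_one_add_smul_fin_two (A : Matrix (Fin 2) (Fin 2) R) (ρ : R) :
    (1 + ρ • A).det = 1 + ρ * (A.trace + ρ * A.det) := by
  simp only [det_fin_two, trace_fin_two, Matrix.add_apply, Matrix.smul_apply, smul_eq_mul,
    one_apply, if_true, if_false, zero_ne_one, one_ne_zero]
  ring

end CommRing

theorem posDef_one_add_smul {n R S : Type*} [DecidableEq n]
    [Ring R] [PartialOrder R] [StarRing R] [StarOrderedRing R] [NoZeroDivisors R]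
    [CommSemiring S] [PartialOrder S] [StarRing S] [StarOrderedRing S] [Algebra S R]
    [StarModule S R] [PosSMulMono S R] {A : Matrix n n R} (hA : A.PosSemidef) {ρ : S}
    (hρ : 0 ≤ ρ) : (1 + ρ • A).PosDef :=
  PosDef.one.add_posSemidef (hA.smul hρ)

/-- Determinant identity from the proof of **Proposition 14**: with
`Σ_x = [[σ₁², σ₁₂],[σ₁₂, σ₂²]]` positive semidefinite, `ρ ≥ 0`,
`Δ_x = σ₁²σ₂² − σ₁₂²`, `Δ_r = 1 + ρ(σ₁² + σ₂² + ρΔ_x)` and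
`Σ_c = Σ_x − ρΣ_x(I₂+ρΣ_x)⁻¹Σ_x`, one has `det Σ_c = Δ_x / Δ_r`. -/
theorem det_sigma_c (σ1 σ2 σ12 : ℝ) (ρ : ℝ) (hρ : 0 ≤ ρ)
    (Sx : Matrix (Fin 2) (Fin 2) ℝ) (hSx : Sx = !![σ1, σ12; σ12, σ2])
    (hpsd : Sx.PosSemidef)
    (Dx Dr : ℝ) (hDx : Dx = σ1 * σ2 - σ12 ^ 2)
    (hDr : Dr = 1 + ρ * (σ1 + σ2 + ρ * Dx))
    (Sc : Matrix (Fin 2) (Fin 2) ℝ)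
    (hSc : Sc = Sx - ρ • (Sx * (1 + ρ • Sx)⁻¹ * Sx)) :
    Sc.det = Dx / Dr := by
  have hunit : IsUnit (1 + ρ • Sx).det := (posDef_one_add_smul hpsd hρ).det_pos.ne'.isUnit
  rw [hSc, det_sigma_c_general hunit, Ring.inverse_eq_inv', ← div_eq_mul_inv,
    det_one_add_smul_fin_two, hDr, hDx, hSx, trace_fin_two_of, det_fin_two_of, sq]
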